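/- Let C ⊂ ℝ³ be a dihedral cone with edge the x₁-axis, let D ⊂ ℝ³ be a dihedral cone with edge the x₂-axis, and assume that no facet of C or of D is contained in {x : x₃ = 0}. For t ∈ ℝ let g(t) = λ₃(C ∩ (D + (0,0,t)) ∩ B(0,1)). Then d³g/dt³ is discontinuous at t = 0. More precisely, if both C and D meet both {x : x₃ > 0} and {x : x₃ < 0}, then lim_{t→0⁺} d³g/dt³(t) > lim_{t→0⁻} d³g/dt³(t), while if C meets both {x : x₃ > 0} and {x : x₃ < 0} and D ⊂ {x : x₃ ≥ 0}, then lim_{t→0⁺} d³g/dt³(t) < lim_{t→0⁻} d³g/dt³(t). -/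

import Mathlib

open MeasureTheory Pointwise

/-!
Write `R = √(1 - y² - z²)` and let `ℓ R z` be the length of the part in `(-R, R)` of the slice at
height `z` of the planar section of `D`. By Fubini, `g t` is the integral of `ℓ R (z - t)` over the
planar section of `C`, and the derivative of `g` is a combination of the areas cut out by the planar
section of `C` in the ellipses in which the facets of `D + (0, 0, t)` meet the ball. These areas are
smooth in `t` by homogeneity, but when `D` changes its shape at its edge there also occur areas over
`{z > t}`, which are smooth up to the integral from `0` to `t` of the slice length of the section of
`C`. That length has a kink at height `0`, so this integral has a term in `(max t 0) ^ 2`, and the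
third derivative of `g` jumps by the product of the kinks of `C` and `D`. A kink is negative if the
cone meets both sides of `{x₃ = 0}` and positive otherwise.
-/

namespace DihedralCone

open Set Filter Topology

section ThirdDerivative

variable {f F : ℝ → ℝ} {s : Set ℝ} {a : ℝ}

lemma deriv_eventuallyEq_nhdsWithin_of_isOpen (hs : IsOpen s) (h : f =ᶠ[𝓝[s] a] F) :
    deriv f =ᶠ[𝓝[s] a] deriv F := by
  filter_upwards [eventually_eventually_nhdsWithin.2 h, self_mem_nhdsWithin] with t ht hts
  rw [hs.nhdsWithin_eq hts] at ht
  exact EventuallyEq.deriv_eq ht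

lemma tendsto_deriv_deriv_of_eventuallyEq (hs : IsOpen s) (hF : ContDiffAt ℝ 2 F a)
    (h : f =ᶠ[𝓝[s] a] F) :
    Tendsto (deriv (deriv f)) (𝓝[s] a) (𝓝 (deriv (deriv F) a)) := by
  have hcont : ContinuousAt (deriv (deriv F)) a := by
    have hF' : ContDiffAt ℝ 1 (deriv F) a := hF.derivWithin (by norm_num)
    exact (hF'.derivWithin (m := 0) (by norm_num)).continuousAt
  exact (hcont.tendsto.mono_left nhdsWithin_le_nhds).congr'
    (deriv_eventuallyEq_nhdsWithin_of_isOpen hs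
      (deriv_eventuallyEq_nhdsWithin_of_isOpen hs h)).symm

lemma deriv_deriv_add_mul_sq {H : ℝ → ℝ} (hH : ContDiffAt ℝ 2 H a) (c : ℝ) :
    deriv (deriv fun t => H t + c * (t - a) ^ 2) a = deriv (deriv H) a + 2 * c := by
  have hsq : deriv (fun t => c * (t - a) ^ 2) = fun t => c * (2 * (t - a)) := by
    ext t
    simp
  have hlin : deriv (fun t => c * (2 * (t - a))) a = 2 * c := by
    simp [mul_comm]
  have h := iteratedDeriv_add hH (g := fun t => c * (t - a) ^ 2) (by fun_prop)
  simp only [iteratedDeriv_succ, iteratedDeriv_zero, hsq, hlin] at h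
  exact h

lemma exists_tendsto_deriv_deriv_deriv_of_hasDerivAt_add_posPart_sq {g H : ℝ → ℝ} {κ : ℝ}
    (hH : ContDiffAt ℝ 2 H 0)
    (hg : ∀ᶠ t in 𝓝 0, HasDerivAt g (H t + κ / 2 * max t 0 ^ 2) t) :
    ∃ Lp Lm : ℝ,
      Tendsto (deriv (deriv (deriv g))) (𝓝[>] 0) (𝓝 Lp) ∧
      Tendsto (deriv (deriv (deriv g))) (𝓝[<] 0) (𝓝 Lm) ∧ Lp - Lm = κ := by
  have hright : deriv g =ᶠ[𝓝[>] 0] fun t => H t + κ / 2 * (t - 0) ^ 2 := by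
    filter_upwards [nhdsWithin_le_nhds hg, self_mem_nhdsWithin] with t ht ht0
    rw [ht.deriv, max_eq_left (mem_Ioi.1 ht0).le, sub_zero]
  have hleft : deriv g =ᶠ[𝓝[<] 0] H := by
    filter_upwards [nhdsWithin_le_nhds hg, self_mem_nhdsWithin] with t ht ht0
    simp [ht.deriv, max_eq_right (mem_Iio.1 ht0).le]
  refine ⟨_, _, tendsto_deriv_deriv_of_eventuallyEq isOpen_Ioi (by fun_prop) hright,
    tendsto_deriv_deriv_of_eventuallyEq isOpen_Iio hH hleft, ?_⟩
  rw [deriv_deriv_add_mul_sq hH]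
  ring

end ThirdDerivative

section ParametricIntegral

variable {E F : Type*} [NormedAddCommGroup E] [NormedAddCommGroup F]
  {f : E × ℝ → F} {K V : Set E} {I : Set ℝ} {τ₀ : ℝ}

lemma exists_bound_on_prod_closedBall (hK : IsCompact K) (hI : IsOpen I)
    (hf : ContinuousOn f (K ×ˢ I)) (hτ₀ : τ₀ ∈ I) :
    ∃ r > 0, Metric.closedBall τ₀ r ⊆ I ∧
      ∃ M : ℝ, ∀ x ∈ K, ∀ τ ∈ Metric.closedBall τ₀ r, ‖f (x, τ)‖ ≤ M := by
  obtain ⟨r, hr, hrI⟩ := Metric.nhds_basis_closedBall.mem_iff.1 (hI.mem_nhds hτ₀)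
  obtain ⟨M, hM⟩ := (hK.prod (isCompact_closedBall τ₀ r)).exists_bound_of_continuousOn
    (hf.mono (prod_mono_right hrI))
  exact ⟨r, hr, hrI, M, fun x hx τ hτ => hM (x, τ) ⟨hx, hτ⟩⟩

variable [MeasurableSpace E] [OpensMeasurableSpace E] [SecondCountableTopologyEither E F]
  {μ : Measure E}

lemma aestronglyMeasurable_section (hK : IsCompact K) (hf : ContinuousOn f (K ×ˢ I))
    {τ : ℝ} (hτ : τ ∈ I) : AEStronglyMeasurable (fun x => f (x, τ)) (μ.restrict K) :=
  (hf.comp (by fun_prop) fun _ hx => ⟨hx, hτ⟩).aestronglyMeasurable hK.measurableSet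

variable [NormedSpace ℝ F] [IsFiniteMeasureOnCompacts μ]

lemma continuousOn_setIntegral (hK : IsCompact K) (hI : IsOpen I)
    (hf : ContinuousOn f (K ×ˢ I)) : ContinuousOn (fun τ => ∫ x in K, f (x, τ) ∂μ) I := by
  intro τ₀ hτ₀
  obtain ⟨r, hr, hrI, M, hM⟩ := exists_bound_on_prod_closedBall hK hI hf hτ₀
  have hball : Metric.closedBall τ₀ r ∈ 𝓝 τ₀ := Metric.closedBall_mem_nhds _ hr
  refine (continuousAt_of_dominated (bound := fun _ => M) ?_ ?_
    (integrableOn_const hK.measure_ne_top) ?_).continuousWithinAt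
  · filter_upwards [hball] with τ hτ using aestronglyMeasurable_section hK hf (hrI hτ)
  · filter_upwards [hball] with τ hτ
    filter_upwards [ae_restrict_mem hK.measurableSet] with x hx using hM x hx τ hτ
  · filter_upwards [ae_restrict_mem hK.measurableSet] with x hx
    exact (hf.comp (by fun_prop) fun _ hτ => ⟨hx, hτ⟩ :
      ContinuousOn (fun τ => f (x, τ)) I).continuousAt (hI.mem_nhds hτ₀)

variable [NormedSpace ℝ E]

lemma hasDerivAt_setIntegral (hK : IsCompact K) (hV : IsOpen V) (hKV : K ⊆ V) (hI : IsOpen I)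
    (hf : ContDiffOn ℝ 1 f (V ×ˢ I)) (hτ₀ : τ₀ ∈ I) :
    HasDerivAt (fun τ => ∫ x in K, f (x, τ) ∂μ) (∫ x in K, fderiv ℝ f (x, τ₀) (0, 1) ∂μ) τ₀ := by
  have hVI : IsOpen (V ×ˢ I) := hV.prod hI
  have hfK : ContinuousOn f (K ×ˢ I) := hf.continuousOn.mono (prod_mono_left hKV)
  have hf'K : ContinuousOn (fun p => fderiv ℝ f p (0, 1)) (K ×ˢ I) :=
    ((hf.continuousOn_fderiv_of_isOpen hVI le_rfl).clm_apply continuousOn_const).mono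
      (prod_mono_left hKV)
  obtain ⟨r, hr, hrI, M, hM⟩ := exists_bound_on_prod_closedBall hK hI hf'K hτ₀
  have hball : Metric.closedBall τ₀ r ∈ 𝓝 τ₀ := Metric.closedBall_mem_nhds _ hr
  refine (hasDerivAt_integral_of_dominated_loc_of_deriv_le (F := fun τ x => f (x, τ))
    (F' := fun τ x => fderiv ℝ f (x, τ) (0, 1)) (bound := fun _ => M) hball ?_ ?_
    (aestronglyMeasurable_section hK hf'K hτ₀) ?_
    (integrableOn_const hK.measure_ne_top) ?_).2
  · filter_upwards [hball] with τ hτ using aestronglyMeasurable_section hK hfK (hrI hτ)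
  · exact (hfK.comp (by fun_prop) fun _ hx => ⟨hx, hτ₀⟩).integrableOn_compact hK
  · filter_upwards [ae_restrict_mem hK.measurableSet] with x hx τ hτ using hM x hx τ hτ
  · filter_upwards [ae_restrict_mem hK.measurableSet] with x hx τ hτ
    have hdf : HasFDerivAt f (fderiv ℝ f (x, τ)) (x, τ) :=
      ((hf.differentiableOn one_ne_zero).differentiableAt
        (hVI.mem_nhds ⟨hKV hx, hrI hτ⟩)).hasFDerivAt
    exact hdf.comp_hasDerivAt τ ((hasDerivAt_const τ x).prodMk (hasDerivAt_id τ))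

lemma contDiffOn_setIntegral (hK : IsCompact K) (hV : IsOpen V) (hKV : K ⊆ V) (hI : IsOpen I)
    {n : ℕ} (hf : ContDiffOn ℝ n f (V ×ˢ I)) :
    ContDiffOn ℝ n (fun τ => ∫ x in K, f (x, τ) ∂μ) I := by
  induction n generalizing f with
  | zero =>
    simp only [Nat.cast_zero, contDiffOn_zero] at hf ⊢
    exact continuousOn_setIntegral hK hI (hf.mono (prod_mono_left hKV))
  | succ n ih =>
    push_cast at hf ⊢
    have hderiv : ∀ τ ∈ I, HasDerivAt (fun τ => ∫ x in K, f (x, τ) ∂μ)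
        (∫ x in K, fderiv ℝ f (x, τ) (0, 1) ∂μ) τ := fun τ hτ =>
      hasDerivAt_setIntegral hK hV hKV hI (hf.of_le (by simp)) hτ
    have hf' : ContDiffOn ℝ n (fun p => fderiv ℝ f p (0, 1)) (V ×ˢ I) :=
      (hf.fderiv_of_isOpen (hV.prod hI) le_rfl).clm_apply contDiffOn_const
    rw [contDiffOn_succ_iff_deriv_of_isOpen hI]
    exact ⟨fun τ hτ => (hderiv τ hτ).differentiableAt.differentiableWithinAt, by simp,
      (ih hf').congr fun τ hτ => (hderiv τ hτ).deriv⟩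

end ParametricIntegral

/-- Rescaling to `τ * ∫ x in 0..1, f (τ * x, τ)` fixes the domain of integration. -/
lemma contDiffAt_intervalIntegral_zero_right {f : ℝ × ℝ → ℝ} {n : ℕ} (hf : ContDiffAt ℝ n f 0) :
    ContDiffAt ℝ n (fun τ => ∫ z in (0 : ℝ)..τ, f (z, τ)) 0 := by
  obtain ⟨u, hu, hfu⟩ := hf.contDiffOn le_rfl (by simp)
  obtain ⟨δ, hδ, hball⟩ := Metric.mem_nhds_iff.1 (by simpa using hu : u ∈ 𝓝 (0 : ℝ × ℝ))
  have hscaled : ContDiffOn ℝ n (fun p : ℝ × ℝ => f (p.2 * p.1, p.2))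
      (Metric.ball 0 2 ×ˢ Metric.ball 0 (δ / 2)) := by
    refine hfu.comp (by fun_prop) fun p hp => hball ?_
    simp only [mem_prod, mem_ball_zero_iff, Real.norm_eq_abs] at hp
    simp only [mem_ball_zero_iff, Prod.norm_def, Real.norm_eq_abs, abs_mul, sup_lt_iff]
    exact ⟨by nlinarith [abs_nonneg p.1, abs_nonneg p.2], by linarith⟩
  have hunit : ContDiffAt ℝ n (fun τ : ℝ => ∫ x in Icc (0 : ℝ) 1, f (τ * x, τ)) 0 :=
    (contDiffOn_setIntegral isCompact_Icc Metric.isOpen_ball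
      (fun x hx => by simpa [abs_of_nonneg hx.1] using hx.2.trans_lt one_lt_two)
      Metric.isOpen_ball hscaled).contDiffAt (Metric.ball_mem_nhds _ (half_pos hδ))
  refine (contDiffAt_id.mul hunit).congr_of_eventuallyEq (Eventually.of_forall fun τ => ?_)
  simp [integral_Icc_eq_integral_Ioc, ← intervalIntegral.integral_of_le,
    intervalIntegral.mul_integral_comp_mul_left (f := fun z => f (z, τ))]

lemma eventually_hasDerivAt_integral_right {f : ℝ → ℝ} {a : ℝ}
    (hf : ∀ᶠ τ in 𝓝 a, ContinuousAt f τ) :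
    ∀ᶠ t in 𝓝 a, HasDerivAt (fun t => ∫ τ in a..t, f τ) (f t) t := by
  obtain ⟨δ, hδ, hball⟩ := Metric.eventually_nhds_iff_ball.1 hf
  have hcont : ContinuousOn f (Metric.ball a δ) := fun τ hτ => (hball τ hτ).continuousWithinAt
  filter_upwards [Metric.ball_mem_nhds a hδ] with t ht
  have hsub : uIcc a t ⊆ Metric.ball a δ :=
    (convex_ball a δ).ordConnected.uIcc_subset (Metric.mem_ball_self hδ) ht
  exact intervalIntegral.integral_hasDerivAt_right (hcont.mono hsub).intervalIntegrable
    (hcont.stronglyMeasurableAtFilter Metric.isOpen_ball t ht) (hball t ht)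

section Slicing

variable {α β : Type*} [MeasurableSpace α] [MeasurableSpace β] {μ : Measure α} {ν : Measure β}
  [SFinite μ] [SFinite ν] {A : Set (α × β)}

lemma integrable_measureReal_slice (hA : MeasurableSet A) (hfin : μ.prod ν A ≠ ⊤) :
    Integrable (fun b => μ.real {a | (a, b) ∈ A}) ν := by
  rw [Measure.prod_apply_symm hA] at hfin
  exact integrable_toReal_of_lintegral_ne_top (measurable_measure_prodMk_right hA).aemeasurable hfin

lemma measureReal_prod_eq_integral_slice (hA : MeasurableSet A) (hfin : μ.prod ν A ≠ ⊤) :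
    (μ.prod ν).real A = ∫ b, μ.real {a | (a, b) ∈ A} ∂ν := by
  have hmeas := measurable_measure_prodMk_right (μ := μ) hA
  rw [Measure.prod_apply_symm hA] at hfin
  simp only [measureReal_def, Measure.prod_apply_symm hA]
  exact (integral_toReal hmeas.aemeasurable (ae_lt_top hmeas hfin)).symm

lemma measureReal_prod_inter_snd_preimage_eq_setIntegral (hA : MeasurableSet A)
    (hfin : μ.prod ν A ≠ ⊤) {B : Set β} (hB : MeasurableSet B) :
    (μ.prod ν).real (A ∩ Prod.snd ⁻¹' B) = ∫ b in B, μ.real {a | (a, b) ∈ A} ∂ν := by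
  rw [measureReal_prod_eq_integral_slice (hA.inter (measurable_snd hB))
    (measure_ne_top_of_subset inter_subset_left hfin), ← integral_indicator hB]
  refine integral_congr_ae (Eventually.of_forall fun b => ?_)
  by_cases hb : b ∈ B <;> simp [hb]

end Slicing

section Polar

open Real

lemma lintegral_Ioo_zero_ofReal {r : ℝ} (hr : 0 ≤ r) :
    ∫⁻ s in Ioo 0 r, ENNReal.ofReal s = ENNReal.ofReal (r ^ 2 / 2) := by
  have hint : IntegrableOn (fun s : ℝ => s) (Ioo 0 r) :=
    continuous_id.integrableOn_Icc.mono_set Ioo_subset_Icc_self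
  rw [← ofReal_integral_eq_lintegral_ofReal hint
      (ae_restrict_of_forall_mem measurableSet_Ioo fun s hs => hs.1.le),
    ← integral_Ioc_eq_integral_Ioo, ← intervalIntegral.integral_of_le hr]
  simp

variable {A : Set (ℝ × ℝ)} {T : Set ℝ} {ρ : ℝ → ℝ}

lemma volume_eq_lintegral_polar (hA : MeasurableSet A) (hρ : ∀ θ, 0 ≤ ρ θ)
    (hmem : ∀ r > 0, ∀ θ, (r * cos θ, r * sin θ) ∈ A ↔ θ ∈ T ∧ r < ρ θ) :
    volume A = ∫⁻ θ in Ioo (-π) π, T.indicator (fun θ => ENNReal.ofReal (ρ θ ^ 2 / 2)) θ := by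
  have hmeas : Measurable fun p : ℝ × ℝ =>
      ENNReal.ofReal p.1 • A.indicator (1 : ℝ × ℝ → ENNReal) (polarCoord.symm p) :=
    Measurable.mul (by fun_prop)
      ((measurable_one.indicator hA).comp continuous_polarCoord_symm.measurable)
  have hradial : ∀ θ, ∫⁻ r in Ioi 0, ENNReal.ofReal r •
      A.indicator (1 : ℝ × ℝ → ENNReal) (polarCoord.symm (r, θ)) =
      T.indicator (fun θ => ENNReal.ofReal (ρ θ ^ 2 / 2)) θ := by
    intro θ
    have hslice : ∀ r ∈ Ioi (0 : ℝ), ENNReal.ofReal r •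
        A.indicator (1 : ℝ × ℝ → ENNReal) (polarCoord.symm (r, θ)) =
        T.indicator (fun θ => (Iio (ρ θ)).indicator ENNReal.ofReal r) θ := by
      intro r hr
      classical
      simp [indicator_apply, polarCoord_symm_apply, hmem r hr θ, ← ite_and]
    rw [setLIntegral_congr_fun measurableSet_Ioi hslice]
    by_cases hθ : θ ∈ T
    · simp only [indicator_of_mem hθ]
      rw [lintegral_indicator measurableSet_Iio, Measure.restrict_restrict measurableSet_Iio,
        inter_comm, Ioi_inter_Iio, lintegral_Ioo_zero_ofReal (hρ θ)]
    · simp [hθ]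
  rw [← lintegral_indicator_one hA, ← lintegral_comp_polarCoord_symm, polarCoord_target,
    Measure.volume_eq_prod, ← Measure.prod_restrict, lintegral_prod_symm' _ hmeas]
  simp only [hradial]

lemma volume_real_eq_integral_polar (hA : MeasurableSet A) (hT : MeasurableSet T)
    (hρm : Measurable ρ) (hρ : ∀ θ, 0 ≤ ρ θ)
    (hmem : ∀ r > 0, ∀ θ, (r * cos θ, r * sin θ) ∈ A ↔ θ ∈ T ∧ r < ρ θ) :
    volume.real A = ∫ θ in Icc (-π) π, ρ θ ^ 2 / 2 ∂(volume.restrict T) := by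
  rw [measureReal_def, volume_eq_lintegral_polar hA hρ hmem, lintegral_indicator hT,
    Measure.restrict_comm hT, integral_Icc_eq_integral_Ioo,
    integral_eq_lintegral_of_nonneg_ae (Eventually.of_forall fun θ => by positivity)
      (by fun_prop)]

end Polar

/-- The projection of `x` to `[-R, R]`. It turns the length of the part of a ray or segment in
`(-R, R)` into a difference of values at the endpoints. -/
noncomputable def clamp (R x : ℝ) : ℝ := max (-R) (min R x)

section Clamp

variable {R x : ℝ}

lemma continuous_clamp : Continuous fun p : ℝ × ℝ => clamp p.1 p.2 := by
  unfold clamp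
  fun_prop

lemma monotone_clamp (R : ℝ) : Monotone (clamp R) := fun _ _ h =>
  max_le_max le_rfl (min_le_min le_rfl h)

lemma clamp_of_abs_le (h : |x| ≤ R) : clamp R x = x := by
  rw [clamp, min_eq_right (abs_le.1 h).2, max_eq_right (abs_le.1 h).1]

lemma clamp_zero_left (x : ℝ) : clamp 0 x = 0 := by simp [clamp]

lemma clamp_zero_right (hR : 0 ≤ R) : clamp R 0 = 0 := clamp_of_abs_le (by simpa)

lemma volume_real_segment_inter_ball (hR : 0 ≤ R) (lo hi : ℝ) :
    volume.real {r : ℝ | (lo ≤ r ∧ r ≤ hi) ∧ |r| < R} =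
      max (clamp R hi) (clamp R lo) - clamp R lo := by
  have hset : {r : ℝ | (lo ≤ r ∧ r ≤ hi) ∧ |r| < R} = Icc lo hi ∩ Ioo (-R) R := by
    ext r
    simp only [mem_ofPred_eq, abs_lt, mem_inter_iff, mem_Icc, mem_Ioo]
  have hae : (Icc lo hi ∩ Ioo (-R) R : Set ℝ) =ᵐ[volume] (Icc lo hi ∩ Icc (-R) R : Set ℝ) :=
    (ae_eq_refl _).inter Ioo_ae_eq_Icc
  rw [hset, measureReal_congr hae, Icc_inter_Icc, Real.volume_real_Icc]
  simp only [clamp, max_def, min_def]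
  split_ifs <;> linarith

lemma volume_real_upper_ray_inter_ball (hR : 0 ≤ R) (lo : ℝ) :
    volume.real {r : ℝ | lo ≤ r ∧ |r| < R} = R - clamp R lo := by
  have hset : {r : ℝ | lo ≤ r ∧ |r| < R} = {r : ℝ | (lo ≤ r ∧ r ≤ R) ∧ |r| < R} := by
    ext r
    exact ⟨fun h => ⟨⟨h.1, (abs_lt.1 h.2).2.le⟩, h.2⟩, fun h => ⟨h.1.1, h.2⟩⟩
  have hclamp : clamp R lo ≤ R := max_le (by linarith) (min_le_left _ _)
  rw [hset, volume_real_segment_inter_ball hR, clamp_of_abs_le (abs_of_nonneg hR).le,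
    max_eq_left hclamp]

lemma volume_real_lower_ray_inter_ball (hR : 0 ≤ R) (hi : ℝ) :
    volume.real {r : ℝ | r ≤ hi ∧ |r| < R} = R + clamp R hi := by
  have hset : {r : ℝ | r ≤ hi ∧ |r| < R} = {r : ℝ | (-R ≤ r ∧ r ≤ hi) ∧ |r| < R} := by
    ext r
    exact ⟨fun h => ⟨⟨(abs_lt.1 h.2).1.le, h.1⟩, h.2⟩, fun h => ⟨h.1.2, h.2⟩⟩
  have hclamp : clamp R (-R) = -R := clamp_of_abs_le (by rw [abs_neg, abs_of_nonneg hR])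
  have hle : -R ≤ clamp R hi := le_max_left _ _
  rw [hset, volume_real_segment_inter_ball hR, hclamp, max_eq_left hle]
  ring

lemma integral_zero_indicator_abs_lt (hR : 0 ≤ R) (x : ℝ) :
    ∫ r in 0..x, {r : ℝ | |r| < R}.indicator 1 r = clamp R x := by
  have hmeas : MeasurableSet {r : ℝ | |r| < R} :=
    (isOpen_lt (by fun_prop) (by fun_prop)).measurableSet
  have hle : ∀ lo hi : ℝ, lo ≤ hi →
      ∫ r in lo..hi, {r : ℝ | |r| < R}.indicator (1 : ℝ → ℝ) r = clamp R hi - clamp R lo := by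
    intro lo hi h
    rw [intervalIntegral.integral_of_le h, ← integral_Icc_eq_integral_Ioc,
      integral_indicator_one hmeas, measureReal_restrict_apply hmeas, inter_comm,
      ← max_eq_left (monotone_clamp R h), ← volume_real_segment_inter_ball hR]
    rfl
  rcases le_total 0 x with hx | hx
  · rw [hle 0 x hx, clamp_zero_right hR, sub_zero]
  · rw [intervalIntegral.integral_symm, hle x 0 hx, clamp_zero_right hR, zero_sub, neg_neg]

lemma mul_integral_zero_indicator_abs_mul_lt (hR : 0 ≤ R) (γ w : ℝ) :
    γ * ∫ u in 0..w, {u : ℝ | |γ * u| < R}.indicator 1 u = clamp R (γ * w) := by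
  rw [← integral_zero_indicator_abs_lt hR, ← mul_zero γ,
    ← intervalIntegral.mul_integral_comp_mul_left, mul_zero]
  rfl

/-- For `z ≥ 0` the larger of the two values belongs to the larger slope, for `z ≤ 0` to the
smaller one. -/
lemma max_clamp_mul (hR : 0 ≤ R) (α β z : ℝ) :
    max (clamp R (α * z)) (clamp R (β * z)) =
      clamp R (min α β * z) + (clamp R (max α β * max z 0) - clamp R (min α β * max z 0)) := by
  rw [← (monotone_clamp R).map_max]
  rcases le_total 0 z with hz | hz
  · rw [max_eq_left hz, ← max_mul_of_nonneg _ _ hz, add_sub_cancel]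
  · rw [max_eq_right hz, ← (antitone_mul_right hz).map_min]
    simp [clamp_zero_right hR]

end Clamp

lemma integral_zero_indicator_Ioi (f : ℝ → ℝ) (w : ℝ) :
    ∫ u in 0..w, (Ioi 0).indicator f u = ∫ u in 0..max w 0, f u := by
  rcases le_total 0 w with hw | hw
  · rw [max_eq_left hw, intervalIntegral.integral_of_le hw, intervalIntegral.integral_of_le hw]
    exact setIntegral_congr_fun measurableSet_Ioc fun u hu => indicator_of_mem hu.1 f
  · rw [max_eq_right hw, intervalIntegral.integral_same, intervalIntegral.integral_of_ge hw,
      setIntegral_congr_fun (f := (Ioi 0).indicator f) (g := 0) measurableSet_Ioc fun u hu =>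
        indicator_of_notMem (not_lt.2 hu.2) f]
    simp

/-- A formula `length R z` for the length of the slice at height `z` of a planar set
bounded by rays `r = slope i * z`, cut off at `|r| < R`. The ray `i` contributes with weight
`coeff i` over `z < 0` and with weight `coeff i + upperCoeff i` over `z > 0`. -/
structure SliceProfile (ι : Type*) where
  /-- The coefficient of `R`. -/
  base : ℝ
  /-- The slopes `dr / dz` of the bounding rays. -/
  slope : ι → ℝ
  /-- The weights of the bounding rays over all heights. -/
  coeff : ι → ℝ
  /-- The additional weights of the bounding rays over `z > 0`. -/
  upperCoeff : ι → ℝ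

namespace SliceProfile

variable {ι : Type*} [Fintype ι] (P : SliceProfile ι)

/-- The slice length at height `z` encoded by `P`, with cutoff `|r| < R`. -/
noncomputable def length (R z : ℝ) : ℝ :=
  P.base * R + ∑ i, (P.coeff i * clamp R (P.slope i * z) +
    P.upperCoeff i * clamp R (P.slope i * max z 0))

/-- The jump at `z = 0` of the slope of the slice length. -/
noncomputable def kink : ℝ := ∑ i, P.upperCoeff i * P.slope i

/-- `P` computes the slice lengths of the planar set `S`. -/
def Describes (S : Set (ℝ × ℝ)) : Prop :=
  ∀ R : ℝ, 0 ≤ R → ∀ z : ℝ, volume.real {r : ℝ | (r, z) ∈ S ∧ |r| < R} = P.length R z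

lemma length_of_abs_le {R z : ℝ} (h : ∀ i, |P.slope i * z| ≤ R) :
    P.length R z = P.base * R + (∑ i, P.coeff i * P.slope i) * z + P.kink * max z 0 := by
  have habs : ∀ i, |P.slope i * max z 0| ≤ R := fun i => by
    refine le_trans ?_ (h i)
    rw [abs_mul, abs_mul]
    refine mul_le_mul_of_nonneg_left ?_ (abs_nonneg _)
    rcases le_total 0 z with hz | hz <;> simp [hz]
  simp only [length, clamp_of_abs_le (h _), clamp_of_abs_le (habs _), Finset.sum_add_distrib,
    kink, Finset.sum_mul]
  simp only [mul_assoc, add_assoc]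

end SliceProfile

/-- The profile of `a * R + c₁ * ρ₁ + c₂ * ρ₂ + m * max ρ₁ ρ₂`, where `ρ₁`, `ρ₂` are the clamped
positions of two rays of slopes `α`, `β`. -/
noncomputable def maxProfile (a c₁ c₂ m α β : ℝ) : SliceProfile (Fin 4) where
  base := a
  slope := ![α, β, min α β, max α β]
  coeff := ![c₁, c₂, m, 0]
  upperCoeff := ![0, 0, -m, m]

lemma length_maxProfile {R : ℝ} (hR : 0 ≤ R) (a c₁ c₂ m α β z : ℝ) :
    (maxProfile a c₁ c₂ m α β).length R z = a * R + c₁ * clamp R (α * z) +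
      c₂ * clamp R (β * z) + m * max (clamp R (α * z)) (clamp R (β * z)) := by
  rw [max_clamp_mul hR]
  simp [SliceProfile.length, maxProfile, Fin.sum_univ_four]
  ring

lemma kink_maxProfile (a c₁ c₂ m α β : ℝ) :
    (maxProfile a c₁ c₂ m α β).kink = m * |α - β| := by
  rw [← max_sub_min_eq_abs']
  simp [SliceProfile.kink, maxProfile, Fin.sum_univ_four]
  ring

/-- The planar sector cut out by two half-planes through the origin. -/
def sector (p₁ q₁ p₂ q₂ : ℝ) : Set (ℝ × ℝ) :=
  {x | p₁ * x.1 + q₁ * x.2 ≤ 0 ∧ p₂ * x.1 + q₂ * x.2 ≤ 0}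

/-- The jump at height `0` of the slope of the slice length of `sector p₁ q₁ p₂ q₂`. -/
noncomputable def sectorKink (p₁ q₁ p₂ q₂ : ℝ) : ℝ := -(|p₁ * q₂ - p₂ * q₁| / (p₁ * p₂))

section Sector

variable {p₁ q₁ p₂ q₂ : ℝ}

lemma measurableSet_sector (p₁ q₁ p₂ q₂ : ℝ) : MeasurableSet (sector p₁ q₁ p₂ q₂) := by
  have hhalf : ∀ p q : ℝ, MeasurableSet {x : ℝ × ℝ | p * x.1 + q * x.2 ≤ 0} := fun p q =>
    measurableSet_le (by fun_prop) (by fun_prop)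
  exact (hhalf p₁ q₁).inter (hhalf p₂ q₂)

lemma sector_comm (p₁ q₁ p₂ q₂ : ℝ) : sector p₁ q₁ p₂ q₂ = sector p₂ q₂ p₁ q₁ :=
  ext fun _ => and_comm

lemma smul_mem_sector_iff {r : ℝ} (hr : 0 < r) (x : ℝ × ℝ) :
    r • x ∈ sector p₁ q₁ p₂ q₂ ↔ x ∈ sector p₁ q₁ p₂ q₂ := by
  have hhalf : ∀ p q : ℝ, p * (r * x.1) + q * (r * x.2) ≤ 0 ↔ p * x.1 + q * x.2 ≤ 0 := by
    intro p q
    rw [mul_left_comm, mul_left_comm q, ← mul_add, mul_nonpos_iff_pos_imp_nonpos]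
    constructor <;> intro h <;> grind
  simp only [sector, mem_ofPred_eq, Prod.smul_fst, Prod.smul_snd, smul_eq_mul, hhalf]

lemma add_nonpos_iff_le_div_mul {p : ℝ} (hp : 0 < p) (q r z : ℝ) :
    p * r + q * z ≤ 0 ↔ r ≤ -q / p * z := by
  rw [div_mul_eq_mul_div, le_div_iff₀ hp]
  constructor <;> intro h <;> linarith

lemma add_nonpos_iff_div_mul_le {p : ℝ} (hp : p < 0) (q r z : ℝ) :
    p * r + q * z ≤ 0 ↔ -q / p * z ≤ r := by
  rw [div_mul_eq_mul_div, div_le_iff_of_neg hp]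
  constructor <;> intro h <;> linarith

lemma describes_sector_of_pos_pos (h₁ : 0 < p₁) (h₂ : 0 < p₂) :
    (maxProfile 1 1 1 (-1) (-q₁ / p₁) (-q₂ / p₂)).Describes (sector p₁ q₁ p₂ q₂) := by
  intro R hR z
  simp only [sector, mem_ofPred_eq, add_nonpos_iff_le_div_mul h₁, add_nonpos_iff_le_div_mul h₂,
    ← le_min_iff]
  rw [volume_real_lower_ray_inter_ball hR, (monotone_clamp R).map_min, length_maxProfile hR]
  linarith [min_add_max (clamp R (-q₁ / p₁ * z)) (clamp R (-q₂ / p₂ * z))]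

lemma describes_sector_of_neg_neg (h₁ : p₁ < 0) (h₂ : p₂ < 0) :
    (maxProfile 1 0 0 (-1) (-q₁ / p₁) (-q₂ / p₂)).Describes (sector p₁ q₁ p₂ q₂) := by
  intro R hR z
  simp only [sector, mem_ofPred_eq, add_nonpos_iff_div_mul_le h₁, add_nonpos_iff_div_mul_le h₂,
    ← max_le_iff]
  rw [volume_real_upper_ray_inter_ball hR, (monotone_clamp R).map_max, length_maxProfile hR]
  ring

lemma describes_sector_of_neg_pos (h₁ : p₁ < 0) (h₂ : 0 < p₂) :
    (maxProfile 0 (-1) 0 1 (-q₁ / p₁) (-q₂ / p₂)).Describes (sector p₁ q₁ p₂ q₂) := by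
  intro R hR z
  simp only [sector, mem_ofPred_eq, add_nonpos_iff_div_mul_le h₁, add_nonpos_iff_le_div_mul h₂]
  rw [volume_real_segment_inter_ball hR, length_maxProfile hR, max_comm]
  ring

lemma abs_neg_div_sub_neg_div (h₁ : p₁ ≠ 0) (h₂ : p₂ ≠ 0) :
    |-q₁ / p₁ - -q₂ / p₂| = |p₁ * q₂ - p₂ * q₁| / |p₁ * p₂| := by
  rw [← abs_div]
  congr 1
  field_simp
  ring

lemma exists_describes_sector (h₁ : p₁ ≠ 0) (h₂ : p₂ ≠ 0) :
    ∃ P : SliceProfile (Fin 4), P.Describes (sector p₁ q₁ p₂ q₂) ∧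
      P.kink = sectorKink p₁ q₁ p₂ q₂ := by
  unfold sectorKink
  wlog h : p₁ ≤ p₂ generalizing p₁ q₁ p₂ q₂
  · obtain ⟨P, hP, hkink⟩ := this (q₁ := q₂) (q₂ := q₁) h₂ h₁ (le_of_not_ge h)
    rw [sector_comm, mul_comm p₁ p₂, abs_sub_comm]
    exact ⟨P, hP, hkink⟩
  rcases lt_or_gt_of_ne h₁ with h₁' | h₁' <;> rcases lt_or_gt_of_ne h₂ with h₂' | h₂'
  · refine ⟨_, describes_sector_of_neg_neg h₁' h₂', ?_⟩
    rw [kink_maxProfile, abs_neg_div_sub_neg_div h₁ h₂, abs_of_pos (mul_pos_of_neg_of_neg h₁' h₂')]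
    ring
  · refine ⟨_, describes_sector_of_neg_pos h₁' h₂', ?_⟩
    rw [kink_maxProfile, abs_neg_div_sub_neg_div h₁ h₂, abs_of_neg (mul_neg_of_neg_of_pos h₁' h₂'),
      div_neg]
    ring
  · exact absurd h (not_le.2 (h₂'.trans h₁'))
  · refine ⟨_, describes_sector_of_pos_pos h₁' h₂', ?_⟩
    rw [kink_maxProfile, abs_neg_div_sub_neg_div h₁ h₂, abs_of_pos (mul_pos h₁' h₂')]
    ring

lemma sectorKink_neg (hdet : p₁ * q₂ - p₂ * q₁ ≠ 0) (h : 0 < p₁ * p₂) :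
    sectorKink p₁ q₁ p₂ q₂ < 0 :=
  neg_lt_zero.2 (div_pos (abs_pos.2 hdet) h)

lemma sectorKink_pos (hdet : p₁ * q₂ - p₂ * q₁ ≠ 0) (h : p₁ * p₂ < 0) :
    0 < sectorKink p₁ q₁ p₂ q₂ :=
  neg_pos.2 (div_neg_of_pos_of_neg (abs_pos.2 hdet) h)

lemma sectorKink_ne_zero (h₁ : p₁ ≠ 0) (h₂ : p₂ ≠ 0) (hdet : p₁ * q₂ - p₂ * q₁ ≠ 0) :
    sectorKink p₁ q₁ p₂ q₂ ≠ 0 :=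
  neg_ne_zero.2 (div_ne_zero (abs_ne_zero.2 hdet) (mul_ne_zero h₁ h₂))

lemma mul_pos_of_exists_mem_sector (h₁ : p₁ ≠ 0) (h₂ : p₂ ≠ 0) (hdet : p₁ * q₂ - p₂ * q₁ ≠ 0)
    (hpos : ∃ x ∈ sector p₁ q₁ p₂ q₂, 0 < x.2) (hneg : ∃ x ∈ sector p₁ q₁ p₂ q₂, x.2 < 0) :
    0 < p₁ * p₂ := by
  wlog h : p₁ ≤ p₂ generalizing p₁ q₁ p₂ q₂
  · rw [mul_comm]
    exact this h₂ h₁ (by rwa [← neg_ne_zero, neg_sub]) (by rwa [sector_comm])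
      (by rwa [sector_comm]) (le_of_not_ge h)
  by_contra! hle
  have hp₁ : p₁ < 0 := lt_of_not_ge fun hp => (mul_pos (hp.lt_of_ne' h₁)
    ((hp.trans h).lt_of_ne' h₂)).not_ge hle
  have hp₂ : 0 < p₂ := (nonneg_of_mul_nonpos_right hle hp₁).lt_of_ne' h₂
  have hdir : ∀ x ∈ sector p₁ q₁ p₂ q₂, (p₂ * q₁ - p₁ * q₂) * x.2 ≤ 0 := fun x hx => by
    nlinarith [mul_nonpos_of_nonneg_of_nonpos hp₂.le hx.1,
      mul_nonpos_of_nonneg_of_nonpos (neg_pos.2 hp₁).le hx.2]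
  obtain ⟨x, hx, hx₂⟩ := hpos
  obtain ⟨y, hy, hy₂⟩ := hneg
  have hdet_nonneg : 0 ≤ p₁ * q₂ - p₂ * q₁ := by
    linarith [nonpos_of_mul_nonpos_left (hdir x hx) hx₂]
  have hdet_nonpos : p₁ * q₂ - p₂ * q₁ ≤ 0 := by
    linarith [nonneg_of_mul_nonpos_left (hdir y hy) hy₂]
  exact hdet (le_antisymm hdet_nonpos hdet_nonneg)

lemma exists_mem_sector_snd_neg (h : 0 < p₁ * p₂) : ∃ x ∈ sector p₁ q₁ p₂ q₂, x.2 < 0 := by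
  refine ⟨(-p₁ * (|q₁| / p₁ ^ 2 + |q₂| / (p₁ * p₂)), -1), ⟨?_, ?_⟩, by norm_num⟩
  · have hp₁ : p₁ ≠ 0 := left_ne_zero_of_mul h.ne'
    have hq : p₁ * (p₁ * (|q₁| / p₁ ^ 2)) = |q₁| := by field_simp
    have hnonneg : 0 ≤ p₁ * (p₁ * (|q₂| / (p₁ * p₂))) := by
      rw [← mul_assoc, ← sq]
      positivity
    linarith [neg_abs_le q₁]
  · have hp₁ : p₁ ≠ 0 := left_ne_zero_of_mul h.ne'
    have hp₂ : p₂ ≠ 0 := right_ne_zero_of_mul h.ne'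
    have hq : p₂ * (p₁ * (|q₂| / (p₁ * p₂))) = |q₂| := by field_simp
    have hnonneg : 0 ≤ p₁ * p₂ * (|q₁| / p₁ ^ 2) := by positivity
    linarith [neg_abs_le q₂]

end Sector

lemma norm_le_one_of_sq_add_sq_lt_one {p : ℝ × ℝ} (h : p.1 ^ 2 + p.2 ^ 2 < 1) : ‖p‖ ≤ 1 := by
  rw [Prod.norm_def, sup_le_iff, Real.norm_eq_abs, Real.norm_eq_abs, ← sq_le_one_iff_abs_le_one,
    ← sq_le_one_iff_abs_le_one]
  exact ⟨by linarith [sq_nonneg p.2], by linarith [sq_nonneg p.1]⟩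

/-- Half the length of the chord of the unit ball of `ℝ × (ℝ × ℝ)` over `p : ℝ × ℝ`, which is zero
if there is no such chord. -/
noncomputable def halfChord (p : ℝ × ℝ) : ℝ := √(1 - p.1 ^ 2 - p.2 ^ 2)

section HalfChord

variable {p : ℝ × ℝ}

lemma continuous_halfChord : Continuous halfChord := by
  unfold halfChord
  fun_prop

lemma halfChord_nonneg (p : ℝ × ℝ) : 0 ≤ halfChord p := Real.sqrt_nonneg _

lemma abs_lt_halfChord_iff {x : ℝ} : |x| < halfChord p ↔ x ^ 2 + p.1 ^ 2 + p.2 ^ 2 < 1 := by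
  rw [halfChord, Real.lt_sqrt (abs_nonneg x), sq_abs]
  constructor <;> intro h <;> linarith

lemma norm_le_one_of_abs_lt_halfChord {x : ℝ} (h : |x| < halfChord p) : ‖p‖ ≤ 1 :=
  norm_le_one_of_sq_add_sq_lt_one (by linarith [abs_lt_halfChord_iff.1 h, sq_nonneg x])

lemma halfChord_eq_zero_of_one_lt_norm (hp : 1 < ‖p‖) : halfChord p = 0 := by
  refine ((halfChord_nonneg p).eq_of_not_lt fun h => hp.not_ge ?_).symm
  exact norm_le_one_of_abs_lt_halfChord (x := 0) (by rwa [abs_zero])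

end HalfChord

/-- The projection along the first axis of the part of the plane `{(x, p) | x = γ * (p.2 - τ)}` in
the open unit ball of `ℝ × (ℝ × ℝ)`. -/
def ellipse (γ τ : ℝ) : Set (ℝ × ℝ) := {p | |γ * (p.2 - τ)| < halfChord p}

/-- The area of the part of `S` in `ellipse γ τ`. -/
noncomputable def sectionArea (S : Set (ℝ × ℝ)) (γ τ : ℝ) : ℝ := volume.real (S ∩ ellipse γ τ)

section SectionArea

variable (γ τ : ℝ)

lemma measurableSet_ellipse : MeasurableSet (ellipse γ τ) :=
  measurableSet_lt (by fun_prop) continuous_halfChord.measurable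

lemma volume_ellipse_ne_top : volume (ellipse γ τ) ≠ ⊤ :=
  measure_ne_top_of_subset (fun _ hp => mem_closedBall_zero_iff.2
    (norm_le_one_of_abs_lt_halfChord hp)) (isCompact_closedBall (0 : ℝ × ℝ) 1).measure_ne_top

lemma mem_ellipse_iff_abs_fst_lt {γ τ y z : ℝ} :
    (y, z) ∈ ellipse γ τ ↔ |y| < halfChord (z, γ * (z - τ)) := by
  rw [ellipse, mem_ofPred_eq, abs_lt_halfChord_iff, abs_lt_halfChord_iff]
  constructor <;> intro h <;> linarith

end SectionArea

section PolarRadius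

variable {k b c r : ℝ}

lemma root_pos (hk : 0 < k) (hc : 0 < c) : 0 < (b + √(b ^ 2 + k * c)) / k := by
  have hb : |b| < √(b ^ 2 + k * c) := by
    rw [Real.lt_sqrt (abs_nonneg b), sq_abs]
    linarith [mul_pos hk hc]
  exact div_pos (by linarith [neg_abs_le b]) hk

lemma mul_sq_lt_iff_lt_root (hk : 0 < k) (hc : 0 < c) (hr : 0 < r) :
    k * r ^ 2 < 2 * b * r + c ↔ r < (b + √(b ^ 2 + k * c)) / k := by
  have hb : |b| < √(b ^ 2 + k * c) := by
    rw [Real.lt_sqrt (abs_nonneg b), sq_abs]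
    linarith [mul_pos hk hc]
  have hsq : k * r ^ 2 < 2 * b * r + c ↔ (k * r - b) ^ 2 < b ^ 2 + k * c := by
    rw [← mul_lt_mul_iff_right₀ hk]
    constructor <;> intro h <;> linarith
  rw [hsq, Real.sq_lt, lt_div_iff₀ hk, and_iff_right (by linarith [le_abs_self b, mul_pos hk hr])]
  constructor <;> intro h <;> linarith

/-- The distance from the origin to the boundary of `ellipse γ τ` in the direction `θ`, provided
the ellipse contains the origin. -/
noncomputable def ellipseRadius (γ τ θ : ℝ) : ℝ :=
  (γ ^ 2 * τ * Real.sin θ + √((γ ^ 2 * τ * Real.sin θ) ^ 2 +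
    (1 + γ ^ 2 * Real.sin θ ^ 2) * (1 - (γ * τ) ^ 2))) / (1 + γ ^ 2 * Real.sin θ ^ 2)

variable {γ τ : ℝ}

lemma one_sub_sq_pos (h : |γ * τ| < 1) : 0 < 1 - (γ * τ) ^ 2 :=
  sub_pos.2 ((sq_lt_one_iff_abs_lt_one _).2 h)

lemma ellipseRadius_pos (h : |γ * τ| < 1) (θ : ℝ) : 0 < ellipseRadius γ τ θ :=
  root_pos (by positivity) (one_sub_sq_pos h)

lemma polar_mem_ellipse_iff (h : |γ * τ| < 1) (hr : 0 < r) (θ : ℝ) :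
    (r * Real.cos θ, r * Real.sin θ) ∈ ellipse γ τ ↔ r < ellipseRadius γ τ θ := by
  rw [ellipseRadius, ← mul_sq_lt_iff_lt_root (by positivity) (one_sub_sq_pos h) hr, ellipse,
    mem_ofPred_eq, abs_lt_halfChord_iff, ← sub_pos, ← sub_pos (b := _ * r ^ 2)]
  apply iff_of_eq
  congr 1
  linear_combination (-r ^ 2) * Real.sin_sq_add_cos_sq θ

lemma contDiffOn_ellipseRadius (γ : ℝ) {n : ℕ∞} :
    ContDiffOn ℝ n (fun q : ℝ × ℝ => ellipseRadius γ q.2 q.1) (univ ×ˢ {τ | |γ * τ| < 1}) := by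
  intro q hq
  have : ContDiff ℝ n fun q : ℝ × ℝ => Real.sin q.1 := Real.contDiff_sin.comp contDiff_fst
  have hdenom : 1 + γ ^ 2 * Real.sin q.1 ^ 2 ≠ 0 := by positivity
  have hdiscr : (γ ^ 2 * q.2 * Real.sin q.1) ^ 2 +
      (1 + γ ^ 2 * Real.sin q.1 ^ 2) * (1 - (γ * q.2) ^ 2) ≠ 0 := by
    have := one_sub_sq_pos hq.2
    positivity
  have hsqrt : ContDiffAt ℝ n (fun q : ℝ × ℝ => √((γ ^ 2 * q.2 * Real.sin q.1) ^ 2 +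
      (1 + γ ^ 2 * Real.sin q.1 ^ 2) * (1 - (γ * q.2) ^ 2))) q := .sqrt (by fun_prop) hdiscr
  refine ContDiffAt.contDiffWithinAt (.div (.add ?_ hsqrt) ?_ hdenom) <;> fun_prop

end PolarRadius

section Area

variable {S : Set (ℝ × ℝ)}

lemma sectionArea_eq_integral_polar (hS : MeasurableSet S)
    (hcone : ∀ r : ℝ, 0 < r → ∀ p, r • p ∈ S ↔ p ∈ S) {γ τ : ℝ} (h : |γ * τ| < 1) :
    sectionArea S γ τ = ∫ θ in Icc (-Real.pi) Real.pi, ellipseRadius γ τ θ ^ 2 / 2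
      ∂(volume.restrict {θ | (Real.cos θ, Real.sin θ) ∈ S}) := by
  refine volume_real_eq_integral_polar (hS.inter (measurableSet_ellipse γ τ)) ?_ ?_
    (fun θ => (ellipseRadius_pos h θ).le) fun r hr θ => ?_
  · exact (by fun_prop : Measurable fun θ => (Real.cos θ, Real.sin θ)) hS
  · unfold ellipseRadius
    fun_prop
  · rw [mem_inter_iff, polar_mem_ellipse_iff h hr]
    exact and_congr_left' (hcone r hr (Real.cos θ, Real.sin θ))

lemma contDiffAt_sectionArea (hS : MeasurableSet S)
    (hcone : ∀ r : ℝ, 0 < r → ∀ p, r • p ∈ S ↔ p ∈ S) (γ : ℝ) (n : ℕ) :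
    ContDiffAt ℝ n (sectionArea S γ) 0 := by
  have hopen : IsOpen {τ | |γ * τ| < 1} := isOpen_lt (by fun_prop) (by fun_prop)
  have hsmooth := contDiffOn_setIntegral (n := n)
    (μ := volume.restrict {θ | (Real.cos θ, Real.sin θ) ∈ S})
    (isCompact_Icc (a := -Real.pi) (b := Real.pi)) isOpen_univ (subset_univ _) hopen
    (((contDiffOn_ellipseRadius γ (n := n)).pow 2).div_const 2)
  have hmem : {τ | |γ * τ| < 1} ∈ 𝓝 (0 : ℝ) := hopen.mem_nhds (by simp)
  refine (hsmooth.contDiffAt hmem).congr_of_eventuallyEq ?_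
  filter_upwards [hmem] with τ hτ using sectionArea_eq_integral_polar hS hcone hτ

lemma sectionArea_inter_lt_snd (hS : MeasurableSet S) (γ τ : ℝ) :
    sectionArea (S ∩ {p | τ < p.2}) γ τ = sectionArea (S ∩ {p | 0 < p.2}) γ τ -
      ∫ z in 0..τ, volume.real {y : ℝ | (y, z) ∈ S ∧ |y| < halfChord (z, γ * (z - τ))} := by
  have hmeas : MeasurableSet (S ∩ ellipse γ τ) := hS.inter (measurableSet_ellipse γ τ)
  have hfin : volume (S ∩ ellipse γ τ) ≠ ⊤ :=
    measure_ne_top_of_subset inter_subset_right (volume_ellipse_ne_top γ τ)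
  have hupper : ∀ τ₀ : ℝ, sectionArea (S ∩ {p | τ₀ < p.2}) γ τ =
      ∫ z in Ioi τ₀, volume.real {y : ℝ | (y, z) ∈ S ∩ ellipse γ τ} := fun τ₀ => by
    rw [sectionArea, inter_right_comm]
    exact measureReal_prod_inter_snd_preimage_eq_setIntegral hmeas hfin measurableSet_Ioi
  have hint := integrable_measureReal_slice hmeas hfin
  simp only [hupper, ← mem_ellipse_iff_abs_fst_lt, ← mem_inter_iff]
  rw [← intervalIntegral.integral_Ioi_sub_Ioi' hint.integrableOn hint.integrableOn, sub_sub_cancel]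

lemma integral_zero_max_zero (τ : ℝ) : ∫ z in 0..τ, max z 0 = max τ 0 ^ 2 / 2 := by
  have hmax : (fun z : ℝ => max z 0) = (Ioi 0).indicator id := by
    ext z
    rcases lt_or_ge 0 z with hz | hz
    · simp [hz, hz.le]
    · simp [hz]
  rw [hmax, integral_zero_indicator_Ioi]
  simp

variable {ι : Type*} [Fintype ι] {P : SliceProfile ι}

lemma eventually_forall_uIcc_zero {p : ℝ × ℝ → Prop} (h : ∀ᶠ q in 𝓝 0, p q) :
    ∀ᶠ τ in 𝓝 (0 : ℝ), ∀ z ∈ uIcc 0 τ, p (z, τ) := by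
  obtain ⟨δ, hδ, hball⟩ := Metric.eventually_nhds_iff_ball.1 h
  filter_upwards [Metric.ball_mem_nhds 0 hδ] with τ hτ z hz
  have hzτ : |z| ≤ |τ| := by simpa using abs_sub_left_of_mem_uIcc hz
  have hτδ : |τ| < δ := by simpa using hτ
  exact hball _ (by simpa [Prod.norm_def] using ⟨hzτ.trans_lt hτδ, hτδ⟩)

lemma eventually_length_halfChord (P : SliceProfile ι) (γ : ℝ) :
    ∀ᶠ q : ℝ × ℝ in 𝓝 0, P.length (halfChord (q.1, γ * (q.1 - q.2))) q.1 =
      P.base * halfChord (q.1, γ * (q.1 - q.2)) + (∑ i, P.coeff i * P.slope i) * q.1 +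
        P.kink * max q.1 0 := by
  have hclose : ∀ i, ∀ᶠ q : ℝ × ℝ in 𝓝 0,
      |P.slope i * q.1| < halfChord (q.1, γ * (q.1 - q.2)) := fun i =>
    ContinuousAt.eventually_lt (by fun_prop)
      (continuous_halfChord.comp (by fun_prop)).continuousAt (by simp [halfChord])
  filter_upwards [eventually_all.2 hclose] with q hq
  exact P.length_of_abs_le fun i => (hq i).le

lemma contDiffAt_integral_halfChord (γ : ℝ) (n : ℕ) :
    ContDiffAt ℝ n (fun τ => ∫ z in 0..τ, halfChord (z, γ * (z - τ))) 0 :=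
  contDiffAt_intervalIntegral_zero_right (f := fun q => halfChord (q.1, γ * (q.1 - q.2)))
    (.sqrt (by fun_prop) (by simp))

/-- Cutting off `S` below height `τ` instead of `0` removes slices of length
`const + kink * max z 0 + …` for `z ∈ (0, τ]`. -/
lemma exists_contDiffAt_sectionArea_inter_lt_snd (hS : MeasurableSet S)
    (hcone : ∀ r : ℝ, 0 < r → ∀ p, r • p ∈ S ↔ p ∈ S) (hP : P.Describes S) (γ : ℝ) (n : ℕ) :
    ∃ A : ℝ → ℝ, ContDiffAt ℝ n A 0 ∧ ∀ᶠ τ in 𝓝 0,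
      sectionArea (S ∩ {p | τ < p.2}) γ τ = A τ - P.kink / 2 * max τ 0 ^ 2 := by
  have hupper : MeasurableSet (S ∩ {p : ℝ × ℝ | 0 < p.2}) :=
    hS.inter (measurableSet_lt measurable_const measurable_snd)
  have hupper_cone : ∀ r : ℝ, 0 < r → ∀ p : ℝ × ℝ,
      r • p ∈ S ∩ {p | 0 < p.2} ↔ p ∈ S ∩ {p | 0 < p.2} := fun r hr p =>
    and_congr (hcone r hr p) (by simp [hr])
  set m := ∑ i, P.coeff i * P.slope i
  refine ⟨fun τ => sectionArea (S ∩ {p | 0 < p.2}) γ τ -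
    (P.base * (∫ z in 0..τ, halfChord (z, γ * (z - τ))) + m * (τ ^ 2 / 2)), ?_, ?_⟩
  · exact (contDiffAt_sectionArea hupper hupper_cone γ n).sub
      ((contDiffAt_const.mul (contDiffAt_integral_halfChord γ n)).add (by fun_prop))
  · filter_upwards [eventually_forall_uIcc_zero (eventually_length_halfChord P γ)] with τ hτ
    have hchord : Continuous fun z => halfChord (z, γ * (z - τ)) :=
      continuous_halfChord.comp (by fun_prop)
    have hslices :
        ∫ z in 0..τ, volume.real {y : ℝ | (y, z) ∈ S ∧ |y| < halfChord (z, γ * (z - τ))} =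
        ∫ z in 0..τ, (P.base * halfChord (z, γ * (z - τ)) + m * z + P.kink * max z 0) :=
      intervalIntegral.integral_congr fun z hz => (hP _ (halfChord_nonneg _) z).trans (hτ z hz)
    rw [sectionArea_inter_lt_snd hS, hslices, intervalIntegral.integral_add,
      intervalIntegral.integral_add, intervalIntegral.integral_const_mul,
      intervalIntegral.integral_const_mul, intervalIntegral.integral_const_mul, integral_id,
      integral_zero_max_zero]
    · ring
    all_goals exact Continuous.intervalIntegrable (by fun_prop) _ _

end Area

lemma integral_intervalIntegral_indicator {α : Type*} [MeasurableSpace α] {μ : Measure α}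
    [SFinite μ] {A : Set (ℝ × α)} (hA : MeasurableSet A) {a b : ℝ}
    (hfin : ((volume.restrict (uIoc a b)).prod μ) A ≠ ⊤) :
    ∫ p, (∫ τ in a..b, A.indicator (1 : ℝ × α → ℝ) (τ, p)) ∂μ =
      ∫ τ in a..b, μ.real {p | (τ, p) ∈ A} := by
  rw [← intervalIntegral_integral_swap (f := fun τ p => A.indicator (1 : ℝ × α → ℝ) (τ, p))
    ((integrable_indicator_iff hA).2 (integrableOn_const hfin))]
  refine intervalIntegral.integral_congr fun τ _ => ?_
  exact integral_indicator_one (measurable_prodMk_left hA)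

section Facet

variable {S : Set (ℝ × ℝ)} {U : Set ℝ} {π : ℝ → ℝ}

lemma clamp_mul_sub (hU : MeasurableSet U)
    (hπ : ∀ (f : ℝ → ℝ) w, ∫ u in 0..w, U.indicator f u = ∫ u in 0..π w, f u) {R : ℝ} (hR : 0 ≤ R)
    (γ z t : ℝ) : clamp R (γ * π (z - t)) = clamp R (γ * π z) -
      γ * ∫ τ in 0..t, {τ | z - τ ∈ U ∧ |γ * (z - τ)| < R}.indicator (1 : ℝ → ℝ) τ := by
  have hclamp : ∀ w, clamp R (γ * π w) =
      γ * ∫ u in 0..w, (U ∩ {u | |γ * u| < R}).indicator (1 : ℝ → ℝ) u := fun w => by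
    rw [← mul_integral_zero_indicator_abs_mul_lt hR, ← hπ, indicator_indicator]
  have hint : ∀ a b : ℝ, IntervalIntegrable ((U ∩ {u | |γ * u| < R}).indicator (1 : ℝ → ℝ))
      volume a b := fun a b => by
    rw [intervalIntegrable_iff]
    have hmeas : MeasurableSet (U ∩ {u | |γ * u| < R}) :=
      hU.inter (measurableSet_lt (by fun_prop) measurable_const)
    exact (integrableOn_const (by simp)).indicator hmeas
  have hsub : ∫ τ in 0..t, {τ | z - τ ∈ U ∧ |γ * (z - τ)| < R}.indicator (1 : ℝ → ℝ) τ =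
      ∫ u in (z - t)..z, (U ∩ {u | |γ * u| < R}).indicator (1 : ℝ → ℝ) u :=
    (intervalIntegral.integral_comp_sub_left (a := 0) (b := t)
      ((U ∩ {u | |γ * u| < R}).indicator (1 : ℝ → ℝ)) z).trans (by rw [sub_zero])
  rw [hsub, hclamp, hclamp, ← intervalIntegral.integral_add_adjacent_intervals
    (hint 0 (z - t)) (hint (z - t) z), mul_add, add_sub_cancel_right]

lemma integrable_clamp_halfChord (S : Set (ℝ × ℝ)) {f : ℝ × ℝ → ℝ} (hf : Continuous f) :
    IntegrableOn (fun p => clamp (halfChord p) (f p)) S := by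
  have hcont : Continuous fun p => clamp (halfChord p) (f p) :=
    continuous_clamp.comp (continuous_halfChord.prodMk hf)
  refine (hcont.integrable_of_hasCompactSupport ?_).integrableOn
  refine HasCompactSupport.intro (isCompact_closedBall (0 : ℝ × ℝ) 1) fun p hp => ?_
  rw [halfChord_eq_zero_of_one_lt_norm (by simpa using hp), clamp_zero_left]

lemma setIntegral_clamp_halfChord (hU : MeasurableSet U) (hπc : Continuous π)
    (hπ : ∀ (f : ℝ → ℝ) w, ∫ u in 0..w, U.indicator f u = ∫ u in 0..π w, f u)
    (γ t : ℝ) :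
    ∫ p in S, clamp (halfChord p) (γ * π (p.2 - t)) =
      (∫ p in S, clamp (halfChord p) (γ * π p.2)) -
        γ * ∫ τ in 0..t, sectionArea (S ∩ {p | p.2 - τ ∈ U}) γ τ := by
  let A : Set (ℝ × (ℝ × ℝ)) := {q | q.2.2 - q.1 ∈ U ∧ |γ * (q.2.2 - q.1)| < halfChord q.2}
  have hA : MeasurableSet A :=
    (measurableSet_preimage (by fun_prop) hU).inter
      (measurableSet_lt (by fun_prop) (continuous_halfChord.measurable.comp measurable_snd))
  have hfin : ((volume.restrict (uIoc 0 t)).prod (volume.restrict S)) A ≠ ⊤ := by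
    have hsub : A ⊆ univ ×ˢ Metric.closedBall 0 1 := fun q hq =>
      ⟨mem_univ _, mem_closedBall_zero_iff.2 (norm_le_one_of_abs_lt_halfChord hq.2)⟩
    refine measure_ne_top_of_subset hsub ?_
    rw [Measure.prod_prod]
    exact ENNReal.mul_ne_top (by simp [uIoc]) (isCompact_closedBall 0 1).measure_ne_top
  have hslice : ∀ τ, (volume.restrict S).real {p | (τ, p) ∈ A} =
      sectionArea (S ∩ {p | p.2 - τ ∈ U}) γ τ := fun τ => by
    have hAτ : MeasurableSet {p | (τ, p) ∈ A} := measurable_prodMk_left hA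
    rw [measureReal_restrict_apply hAτ, sectionArea, inter_comm, inter_assoc]
    rfl
  have hleft : ∀ c : ℝ, IntegrableOn (fun p : ℝ × ℝ => clamp (halfChord p) (γ * π (p.2 - c))) S :=
    fun c => integrable_clamp_halfChord S (by fun_prop)
  have hdiff : ∀ p : ℝ × ℝ, γ * ∫ τ in 0..t, A.indicator (1 : ℝ × (ℝ × ℝ) → ℝ) (τ, p) =
      clamp (halfChord p) (γ * π (p.2 - 0)) - clamp (halfChord p) (γ * π (p.2 - t)) := fun p => by
    rw [clamp_mul_sub hU hπ (halfChord_nonneg p) γ p.2 t, sub_zero, sub_sub_cancel]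
    rfl
  simp only [← hslice]
  rw [← integral_intervalIntegral_indicator hA hfin, ← integral_const_mul]
  simp only [hdiff]
  rw [integral_sub (hleft 0) (hleft t)]
  simp only [sub_zero, sub_sub_cancel]

lemma eventually_hasDerivAt_setIntegral_clamp_halfChord (hU : MeasurableSet U)
    (hπc : Continuous π)
    (hπ : ∀ (f : ℝ → ℝ) w, ∫ u in 0..w, U.indicator f u = ∫ u in 0..π w, f u) (γ : ℝ)
    (hA : ∀ᶠ τ in 𝓝 0, ContinuousAt (fun τ => sectionArea (S ∩ {p | p.2 - τ ∈ U}) γ τ) τ) :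
    ∀ᶠ t in 𝓝 0, HasDerivAt (fun t => ∫ p in S, clamp (halfChord p) (γ * π (p.2 - t)))
      (-(γ * sectionArea (S ∩ {p | p.2 - t ∈ U}) γ t)) t := by
  filter_upwards [eventually_hasDerivAt_integral_right hA] with t ht
  rw [funext (setIntegral_clamp_halfChord hU hπc hπ γ)]
  exact (ht.const_mul γ).const_sub _

end Facet

section Overlap

/-- In coordinates `(x₁, (x₂, x₃))`, the part in the open unit ball of the intersection of the
cylinder over `C` along the first axis with the cylinder over `D` along the second axis, the latter
lifted by `t`. -/
def overlap (C D : Set (ℝ × ℝ)) (t : ℝ) : Set (ℝ × (ℝ × ℝ)) :=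
  {q | q.2 ∈ C ∧ (q.1, q.2.2 - t) ∈ D ∧ |q.1| < halfChord q.2}

variable {C D : Set (ℝ × ℝ)}

lemma measurableSet_overlap (hC : MeasurableSet C) (hD : MeasurableSet D) (t : ℝ) :
    MeasurableSet (overlap C D t) :=
  (measurable_snd hC).inter ((measurableSet_preimage (by fun_prop) hD).inter
    (measurableSet_lt (by fun_prop) (continuous_halfChord.measurable.comp measurable_snd)))

lemma volume_overlap_ne_top (C D : Set (ℝ × ℝ)) (t : ℝ) : volume (overlap C D t) ≠ ⊤ := by
  refine measure_ne_top_of_subset (fun q hq => mem_closedBall_zero_iff.2 ?_)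
    (isCompact_closedBall (0 : ℝ × (ℝ × ℝ)) 1).measure_ne_top
  rw [Prod.norm_def, sup_le_iff, Real.norm_eq_abs]
  refine ⟨?_, norm_le_one_of_abs_lt_halfChord hq.2.2⟩
  rw [← sq_le_one_iff_abs_le_one]
  linarith [abs_lt_halfChord_iff.1 hq.2.2, sq_nonneg q.2.1, sq_nonneg q.2.2]

variable {ι κ : Type*} [Fintype ι] [Fintype κ] {P : SliceProfile ι} {Q : SliceProfile κ}

lemma volume_real_overlap (hC : MeasurableSet C) (hD : MeasurableSet D) (hQ : Q.Describes D)
    (t : ℝ) :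
    volume.real (overlap C D t) = ∫ p in C, Q.length (halfChord p) (p.2 - t) := by
  have hinter : overlap C D t = overlap univ D t ∩ Prod.snd ⁻¹' C := by
    ext q
    simp only [overlap, mem_ofPred_eq, mem_inter_iff, mem_preimage, mem_univ, true_and]
    exact and_comm
  rw [hinter, Measure.volume_eq_prod, measureReal_prod_inter_snd_preimage_eq_setIntegral
    (measurableSet_overlap .univ hD t) (volume_overlap_ne_top univ D t) hC]
  refine integral_congr_ae (Eventually.of_forall fun p => ?_)
  simp only [← hQ _ (halfChord_nonneg p), overlap, mem_ofPred_eq, mem_univ, true_and]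

lemma setIntegral_length_halfChord (C : Set (ℝ × ℝ)) (Q : SliceProfile κ) (t : ℝ) :
    ∫ p in C, Q.length (halfChord p) (p.2 - t) = Q.base * (∫ p in C, halfChord p) +
      ∑ i, (Q.coeff i * (∫ p in C, clamp (halfChord p) (Q.slope i * (p.2 - t))) +
        Q.upperCoeff i * ∫ p in C, clamp (halfChord p) (Q.slope i * max (p.2 - t) 0)) := by
  have hself : ∀ p, clamp (halfChord p) (halfChord p) = halfChord p := fun p =>
    clamp_of_abs_le (abs_of_nonneg (halfChord_nonneg p)).le
  have hchord : IntegrableOn halfChord C := by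
    simpa only [hself] using integrable_clamp_halfChord C continuous_halfChord
  have hwhole : ∀ i, IntegrableOn
      (fun p => Q.coeff i * clamp (halfChord p) (Q.slope i * (p.2 - t))) C := fun i =>
    (integrable_clamp_halfChord C (by fun_prop)).const_mul _
  have hupper : ∀ i, IntegrableOn
      (fun p => Q.upperCoeff i * clamp (halfChord p) (Q.slope i * max (p.2 - t) 0)) C := fun i =>
    (integrable_clamp_halfChord C (by fun_prop)).const_mul _
  have hterm : ∀ i, IntegrableOn (fun p => Q.coeff i * clamp (halfChord p) (Q.slope i * (p.2 - t)) +
      Q.upperCoeff i * clamp (halfChord p) (Q.slope i * max (p.2 - t) 0)) C := fun i =>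
    (hwhole i).add (hupper i)
  simp only [SliceProfile.length]
  rw [integral_add (hchord.const_mul _) (integrable_finsetSum _ fun i _ => hterm i),
    integral_finsetSum _ fun i _ => hterm i, integral_const_mul]
  congr 1
  refine Finset.sum_congr rfl fun i _ => ?_
  rw [integral_add (hwhole i) (hupper i), integral_const_mul, integral_const_mul]

lemma eventually_hasDerivAt_setIntegral_clamp_whole (hC : MeasurableSet C)
    (hcone : ∀ r : ℝ, 0 < r → ∀ p, r • p ∈ C ↔ p ∈ C) (γ : ℝ) :
    ∀ᶠ t in 𝓝 0, HasDerivAt (fun t => ∫ p in C, clamp (halfChord p) (γ * (p.2 - t)))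
      (-(γ * sectionArea C γ t)) t := by
  have hcont : ∀ᶠ τ in 𝓝 0, ContinuousAt (sectionArea C γ) τ :=
    ((contDiffAt_sectionArea hC hcone γ 1).eventually (by simp)).mono fun _ h => h.continuousAt
  simpa using eventually_hasDerivAt_setIntegral_clamp_halfChord (S := C) .univ continuous_id
    (fun f w => by simp) γ (by simpa using hcont)

lemma exists_contDiffAt_hasDerivAt_setIntegral_clamp_upper (hC : MeasurableSet C)
    (hcone : ∀ r : ℝ, 0 < r → ∀ p, r • p ∈ C ↔ p ∈ C) (hP : P.Describes C) (γ : ℝ) :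
    ∃ A : ℝ → ℝ, ContDiffAt ℝ 2 A 0 ∧ ∀ᶠ t in 𝓝 0,
      HasDerivAt (fun t => ∫ p in C, clamp (halfChord p) (γ * max (p.2 - t) 0))
        (-(γ * (A t - P.kink / 2 * max t 0 ^ 2))) t := by
  obtain ⟨A, hA, hAeq⟩ := exists_contDiffAt_sectionArea_inter_lt_snd hC hcone hP γ 2
  refine ⟨A, hA, ?_⟩
  have hcont : ∀ᶠ τ in 𝓝 0,
      ContinuousAt (fun τ => sectionArea (C ∩ {p | p.2 - τ ∈ Ioi 0}) γ τ) τ := by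
    simp only [mem_Ioi, sub_pos]
    filter_upwards [hA.eventually (by simp), eventually_eventually_nhds.2 hAeq] with τ hτ heq
    exact ContinuousAt.congr (hτ.continuousAt.sub (by fun_prop)) (EventuallyEq.symm heq)
  have hderiv := eventually_hasDerivAt_setIntegral_clamp_halfChord measurableSet_Ioi
    (by fun_prop) integral_zero_indicator_Ioi γ hcont
  filter_upwards [hderiv, hAeq] with t ht heq
  simpa only [mem_Ioi, sub_pos, heq] using ht

/-- Only the terms of `Q` with weights `upperCoeff` integrate over half-sections, and each of these
contributes a multiple of `P.kink * (t⁺) ^ 2` to the derivative. -/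
lemma exists_contDiffAt_hasDerivAt_volume_real_overlap (hC : MeasurableSet C)
    (hD : MeasurableSet D) (hcone : ∀ r : ℝ, 0 < r → ∀ p, r • p ∈ C ↔ p ∈ C)
    (hP : P.Describes C) (hQ : Q.Describes D) :
    ∃ H : ℝ → ℝ, ContDiffAt ℝ 2 H 0 ∧ ∀ᶠ t in 𝓝 0,
      HasDerivAt (fun t => volume.real (overlap C D t))
        (H t + P.kink * Q.kink / 2 * max t 0 ^ 2) t := by
  choose A hA hupper using fun i =>
    exists_contDiffAt_hasDerivAt_setIntegral_clamp_upper hC hcone hP (Q.slope i)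
  have hwhole := fun i => eventually_hasDerivAt_setIntegral_clamp_whole hC hcone (Q.slope i)
  refine ⟨fun t => ∑ i, (Q.coeff i * -(Q.slope i * sectionArea C (Q.slope i) t) +
    Q.upperCoeff i * -(Q.slope i * A i t)), ?_, ?_⟩
  · refine ContDiffAt.sum fun i _ => ?_
    have hsec := contDiffAt_sectionArea hC hcone (Q.slope i) 2
    have := hA i
    fun_prop
  · filter_upwards [eventually_all.2 hwhole, eventually_all.2 hupper] with t hwt hut
    have hderiv := (HasDerivAt.fun_sum fun i (_ : i ∈ Finset.univ) =>
      ((hwt i).const_mul (Q.coeff i)).add ((hut i).const_mul (Q.upperCoeff i))).const_add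
        (Q.base * ∫ p in C, halfChord p)
    simp only [volume_real_overlap hC hD hQ, setIntegral_length_halfChord]
    refine hderiv.congr_deriv ?_
    rw [show Q.kink = ∑ i, Q.upperCoeff i * Q.slope i from rfl, Finset.mul_sum, Finset.sum_div,
      Finset.sum_mul, ← Finset.sum_add_distrib]
    refine Finset.sum_congr rfl fun i _ => ?_
    ring

lemma exists_tendsto_deriv_deriv_deriv_volume_real_overlap (hC : MeasurableSet C)
    (hD : MeasurableSet D) (hcone : ∀ r : ℝ, 0 < r → ∀ p, r • p ∈ C ↔ p ∈ C)
    (hP : P.Describes C) (hQ : Q.Describes D) :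
    ∃ Lp Lm : ℝ,
      Tendsto (deriv (deriv (deriv fun t => volume.real (overlap C D t)))) (𝓝[>] 0) (𝓝 Lp) ∧
      Tendsto (deriv (deriv (deriv fun t => volume.real (overlap C D t)))) (𝓝[<] 0) (𝓝 Lm) ∧
      Lp - Lm = P.kink * Q.kink := by
  obtain ⟨H, hH, hderiv⟩ := exists_contDiffAt_hasDerivAt_volume_real_overlap hC hD hcone hP hQ
  exact exists_tendsto_deriv_deriv_deriv_of_hasDerivAt_add_posPart_sq hH hderiv

end Overlap

section Space

lemma measurePreserving_coordinates :
    MeasurePreserving fun x : EuclideanSpace ℝ (Fin 3) => (x 0, (x 1, x 2)) :=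
  ((MeasurePreserving.id volume).prod (volume_preserving_finTwoArrow ℝ)).comp
    ((volume_preserving_piFinSuccAbove (fun _ : Fin 3 => ℝ) 0).comp
      (EuclideanSpace.volume_preserving_symm_measurableEquiv_toLp (Fin 3)))

lemma mem_ball_zero_one_iff (x : EuclideanSpace ℝ (Fin 3)) :
    x ∈ Metric.ball 0 1 ↔ |x 0| < halfChord (x 1, x 2) := by
  rw [mem_ball_zero_iff, EuclideanSpace.norm_eq, Real.sqrt_lt' one_pos, one_pow,
    abs_lt_halfChord_iff, Fin.sum_univ_three]
  simp only [Real.norm_eq_abs, sq_abs]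

/-- The intersection of the half-spaces with outer normals `a₁` and `a₂`. -/
def dihedralCone (a₁ a₂ : EuclideanSpace ℝ (Fin 3)) : Set (EuclideanSpace ℝ (Fin 3)) :=
  {x | @inner ℝ _ _ a₁ x ≤ (0 : ℝ) ∧ @inner ℝ _ _ a₂ x ≤ (0 : ℝ)}

variable {i j : Fin 3} {a₁ a₂ : EuclideanSpace ℝ (Fin 3)}

lemma inner_eq_of_apply_eq_zero (hij : [i, j, 2].Nodup) {a : EuclideanSpace ℝ (Fin 3)}
    (ha : a i = 0) (x : EuclideanSpace ℝ (Fin 3)) :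
    @inner ℝ _ _ a x = a j * x j + a 2 * x 2 := by
  have huniv : Finset.univ = [i, j, 2].toFinset :=
    (Finset.eq_univ_of_card _ (List.toFinset_card_of_nodup hij)).symm
  rw [PiLp.inner_apply, huniv, List.sum_toFinset _ hij]
  simp [ha, mul_comm]

lemma apply_ne_zero_of_not_subset (hij : [i, j, 2].Nodup) {a : EuclideanSpace ℝ (Fin 3)}
    (ha : a i = 0) (ha_ne : a ≠ 0) {S : Set (EuclideanSpace ℝ (Fin 3))}
    (hS : ¬S ∩ {x | @inner ℝ _ _ a x = (0 : ℝ)} ⊆ {x | x 2 = 0}) : a j ≠ 0 := by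
  refine fun haj => hS fun x hx => ?_
  have ha₂ : a 2 ≠ 0 := fun h => ha_ne <| (inner_self_eq_zero (𝕜 := ℝ)).1 <| by
    rw [inner_eq_of_apply_eq_zero hij ha, haj, h]
    simp
  have hx₂ : a 2 * x 2 = 0 := by
    simpa [inner_eq_of_apply_eq_zero hij ha, haj] using hx.2
  exact (mul_eq_zero.1 hx₂).resolve_left ha₂

lemma det_ne_zero_of_linearIndependent (hij : [i, j, 2].Nodup)
    (ha : LinearIndependent ℝ ![a₁, a₂]) (ha₁ : a₁ i = 0) (ha₂ : a₂ i = 0) (haj : a₂ j ≠ 0) :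
    a₁ j * a₂ 2 - a₂ j * a₁ 2 ≠ 0 := by
  refine fun hdet => haj (LinearIndependent.pair_iff.1 ha (a₂ j) (-a₁ j) ?_).1
  refine (inner_self_eq_zero (𝕜 := ℝ)).1 ?_
  rw [inner_eq_of_apply_eq_zero hij (by simp [ha₁, ha₂])]
  simp only [PiLp.add_apply, PiLp.smul_apply, smul_eq_mul]
  linear_combination (a₁ j * a₂ 2 - a₂ j * a₁ 2) * hdet

/-- `a₁` and `a₂` are the outer normals of a dihedral cone whose edge is the axis `i` and whose
facets are transverse to `{x | x 2 = 0}`; the remaining horizontal axis is `j`. -/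
structure TransverseNormals (i j : Fin 3) (a₁ a₂ : EuclideanSpace ℝ (Fin 3)) : Prop where
  nodup : [i, j, 2].Nodup
  left_apply_edge : a₁ i = 0
  right_apply_edge : a₂ i = 0
  left_ne_zero : a₁ j ≠ 0
  right_ne_zero : a₂ j ≠ 0
  det_ne_zero : a₁ j * a₂ 2 - a₂ j * a₁ 2 ≠ 0

lemma transverseNormals_of_not_subset (hij : [i, j, 2].Nodup)
    (ha : LinearIndependent ℝ ![a₁, a₂]) (ha₁ : a₁ i = 0) (ha₂ : a₂ i = 0)
    {S : Set (EuclideanSpace ℝ (Fin 3))}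
    (hS₁ : ¬S ∩ {x | @inner ℝ _ _ a₁ x = (0 : ℝ)} ⊆ {x | x 2 = 0})
    (hS₂ : ¬S ∩ {x | @inner ℝ _ _ a₂ x = (0 : ℝ)} ⊆ {x | x 2 = 0}) :
    TransverseNormals i j a₁ a₂ := by
  have haj := apply_ne_zero_of_not_subset hij ha₂ (ha.ne_zero 1) hS₂
  exact ⟨hij, ha₁, ha₂, apply_ne_zero_of_not_subset hij ha₁ (ha.ne_zero 0) hS₁, haj,
    det_ne_zero_of_linearIndependent hij ha ha₁ ha₂ haj⟩

namespace TransverseNormals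

lemma mem_dihedralCone_iff (ha : TransverseNormals i j a₁ a₂) (x : EuclideanSpace ℝ (Fin 3)) :
    x ∈ dihedralCone a₁ a₂ ↔ (x j, x 2) ∈ sector (a₁ j) (a₁ 2) (a₂ j) (a₂ 2) := by
  rw [dihedralCone, mem_ofPred_eq, inner_eq_of_apply_eq_zero ha.nodup ha.left_apply_edge,
    inner_eq_of_apply_eq_zero ha.nodup ha.right_apply_edge]
  rfl

lemma sectorKink_ne_zero (ha : TransverseNormals i j a₁ a₂) :
    sectorKink (a₁ j) (a₁ 2) (a₂ j) (a₂ 2) ≠ 0 :=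
  DihedralCone.sectorKink_ne_zero ha.left_ne_zero ha.right_ne_zero ha.det_ne_zero

lemma sectorKink_neg_of_nonempty (ha : TransverseNormals i j a₁ a₂)
    (hpos : (dihedralCone a₁ a₂ ∩ {x | 0 < x 2}).Nonempty)
    (hneg : (dihedralCone a₁ a₂ ∩ {x | x 2 < 0}).Nonempty) :
    sectorKink (a₁ j) (a₁ 2) (a₂ j) (a₂ 2) < 0 := by
  obtain ⟨x, hx, hx₂⟩ := hpos
  obtain ⟨y, hy, hy₂⟩ := hneg
  exact sectorKink_neg ha.det_ne_zero (mul_pos_of_exists_mem_sector ha.left_ne_zero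
    ha.right_ne_zero ha.det_ne_zero ⟨_, (ha.mem_dihedralCone_iff x).1 hx, hx₂⟩
    ⟨_, (ha.mem_dihedralCone_iff y).1 hy, hy₂⟩)

lemma sectorKink_pos_of_subset (ha : TransverseNormals i j a₁ a₂)
    (hsub : dihedralCone a₁ a₂ ⊆ {x | 0 ≤ x 2}) :
    0 < sectorKink (a₁ j) (a₁ 2) (a₂ j) (a₂ 2) := by
  refine sectorKink_pos ha.det_ne_zero
    ((mul_ne_zero ha.left_ne_zero ha.right_ne_zero).lt_of_le (not_lt.1 fun h => ?_))
  obtain ⟨p, hp, hp₂⟩ := exists_mem_sector_snd_neg (q₁ := a₁ 2) (q₂ := a₂ 2) h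
  have hj : j ≠ 2 := by
    have := ha.nodup
    simp_all
  let x : EuclideanSpace ℝ (Fin 3) :=
    EuclideanSpace.single j p.1 + EuclideanSpace.single 2 p.2
  have hxj : x j = p.1 := by simp [x, hj]
  have hx₂ : x 2 = p.2 := by simp [x, hj.symm]
  have hxC : x ∈ dihedralCone a₁ a₂ := by
    rwa [ha.mem_dihedralCone_iff, hxj, hx₂]
  exact (hsub hxC).not_gt (hx₂.trans_lt hp₂)

end TransverseNormals

variable {b₁ b₂ : EuclideanSpace ℝ (Fin 3)}

lemma inter_inter_ball_eq_preimage_overlap (ha : TransverseNormals 0 1 a₁ a₂)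
    (hb : TransverseNormals 1 0 b₁ b₂) (t : ℝ) :
    dihedralCone a₁ a₂ ∩
        ((t • EuclideanSpace.single (2 : Fin 3) (1 : ℝ) + ·) '' dihedralCone b₁ b₂) ∩
        Metric.ball 0 1 =
      (fun x : EuclideanSpace ℝ (Fin 3) => (x 0, (x 1, x 2))) ⁻¹'
        overlap (sector (a₁ 1) (a₁ 2) (a₂ 1) (a₂ 2)) (sector (b₁ 0) (b₁ 2) (b₂ 0) (b₂ 2)) t := by
  ext x
  rw [image_add_left, mem_inter_iff, mem_inter_iff, mem_preimage, mem_ball_zero_one_iff,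
    ha.mem_dihedralCone_iff, hb.mem_dihedralCone_iff]
  simp [overlap, neg_add_eq_sub, and_assoc]

lemma exists_tendsto_deriv_deriv_deriv_volume_real_inter (ha : TransverseNormals 0 1 a₁ a₂)
    (hb : TransverseNormals 1 0 b₁ b₂) {g : ℝ → ℝ}
    (hg : ∀ t, g t = volume.real (dihedralCone a₁ a₂ ∩
      ((t • EuclideanSpace.single (2 : Fin 3) (1 : ℝ) + ·) '' dihedralCone b₁ b₂) ∩
      Metric.ball 0 1)) :
    ∃ Lp Lm : ℝ, Tendsto (deriv (deriv (deriv g))) (𝓝[>] 0) (𝓝 Lp) ∧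
      Tendsto (deriv (deriv (deriv g))) (𝓝[<] 0) (𝓝 Lm) ∧
      Lp - Lm = sectorKink (a₁ 1) (a₁ 2) (a₂ 1) (a₂ 2) *
        sectorKink (b₁ 0) (b₁ 2) (b₂ 0) (b₂ 2) := by
  obtain ⟨P, hP, hPkink⟩ := exists_describes_sector (q₁ := a₁ 2) (q₂ := a₂ 2)
    ha.left_ne_zero ha.right_ne_zero
  obtain ⟨Q, hQ, hQkink⟩ := exists_describes_sector (q₁ := b₁ 2) (q₂ := b₂ 2)
    hb.left_ne_zero hb.right_ne_zero
  have hC := measurableSet_sector (a₁ 1) (a₁ 2) (a₂ 1) (a₂ 2)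
  have hD := measurableSet_sector (b₁ 0) (b₁ 2) (b₂ 0) (b₂ 2)
  have hoverlap : g = fun t => volume.real (overlap _ _ t) := funext fun t => by
    rw [hg, inter_inter_ball_eq_preimage_overlap ha hb,
      measurePreserving_coordinates.measureReal_preimage
        (measurableSet_overlap hC hD t).nullMeasurableSet]
  rw [hoverlap, ← hPkink, ← hQkink]
  exact exists_tendsto_deriv_deriv_deriv_volume_real_overlap hC hD
    (fun _ hr => smul_mem_sector_iff hr) hP hQ

end Space

end DihedralCone

/-- Discontinuity of the third derivative of `t ↦ λ₃(C ∩ (D + (0,0,t)) ∩ B(0,1))` at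
`t = 0`, for dihedral cones `C` (with edge the `x₁`-axis) and `D` (with edge the
`x₂`-axis) none of whose facets lies in `{x₃ = 0}`. -/
theorem third_derivative_discontinuous_dihedral
    (a₁ a₂ b₁ b₂ : EuclideanSpace ℝ (Fin 3))
    (ha : LinearIndependent ℝ ![a₁, a₂]) (hb : LinearIndependent ℝ ![b₁, b₂])
    -- the edge of `C` is the `x₁`-axis, the edge of `D` is the `x₂`-axis
    (ha₁ : a₁ 0 = 0) (ha₂ : a₂ 0 = 0) (hb₁ : b₁ 1 = 0) (hb₂ : b₂ 1 = 0)
    (C D : Set (EuclideanSpace ℝ (Fin 3)))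
    (hC : C = {x | @inner ℝ _ _ a₁ x ≤ (0 : ℝ) ∧ @inner ℝ _ _ a₂ x ≤ (0 : ℝ)})
    (hD : D = {x | @inner ℝ _ _ b₁ x ≤ (0 : ℝ) ∧ @inner ℝ _ _ b₂ x ≤ (0 : ℝ)})
    -- no facet of `C` or of `D` is contained in `{x₃ = 0}`
    (hCfac : ¬(C ∩ {x | @inner ℝ _ _ a₁ x = (0 : ℝ)} ⊆ {x | x 2 = 0}) ∧
      ¬(C ∩ {x | @inner ℝ _ _ a₂ x = (0 : ℝ)} ⊆ {x | x 2 = 0}))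
    (hDfac : ¬(D ∩ {x | @inner ℝ _ _ b₁ x = (0 : ℝ)} ⊆ {x | x 2 = 0}) ∧
      ¬(D ∩ {x | @inner ℝ _ _ b₂ x = (0 : ℝ)} ⊆ {x | x 2 = 0}))
    (g : ℝ → ℝ)
    (hg : ∀ t : ℝ, g t =
      (volume (C ∩ ((t • EuclideanSpace.single (2 : Fin 3) (1 : ℝ) + ·) '' D) ∩
        Metric.ball 0 1)).toReal) :
    ¬ContinuousAt (deriv (deriv (deriv g))) 0 ∧
    (((C ∩ {x | 0 < x 2}).Nonempty ∧ (C ∩ {x | x 2 < 0}).Nonempty ∧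
      (D ∩ {x | 0 < x 2}).Nonempty ∧ (D ∩ {x | x 2 < 0}).Nonempty) →
      ∃ Lp Lm : ℝ,
        Filter.Tendsto (deriv (deriv (deriv g))) (nhdsWithin 0 (Set.Ioi 0)) (nhds Lp) ∧
        Filter.Tendsto (deriv (deriv (deriv g))) (nhdsWithin 0 (Set.Iio 0)) (nhds Lm) ∧
        Lm < Lp) ∧
    (((C ∩ {x | 0 < x 2}).Nonempty ∧ (C ∩ {x | x 2 < 0}).Nonempty ∧
      D ⊆ {x | 0 ≤ x 2}) →
      ∃ Lp Lm : ℝ,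
        Filter.Tendsto (deriv (deriv (deriv g))) (nhdsWithin 0 (Set.Ioi 0)) (nhds Lp) ∧
        Filter.Tendsto (deriv (deriv (deriv g))) (nhdsWithin 0 (Set.Iio 0)) (nhds Lm) ∧
        Lp < Lm) := by
  obtain rfl : C = DihedralCone.dihedralCone a₁ a₂ := hC
  obtain rfl : D = DihedralCone.dihedralCone b₁ b₂ := hD
  have hA := DihedralCone.transverseNormals_of_not_subset (i := 0) (j := 1) (by decide) ha ha₁ ha₂
    hCfac.1 hCfac.2
  have hB := DihedralCone.transverseNormals_of_not_subset (i := 1) (j := 0) (by decide) hb hb₁ hb₂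
    hDfac.1 hDfac.2
  obtain ⟨Lp, Lm, hLp, hLm, hjump⟩ :=
    DihedralCone.exists_tendsto_deriv_deriv_deriv_volume_real_inter hA hB hg
  refine ⟨fun hcont => ?_, ?_, ?_⟩
  · have hLp_eq := tendsto_nhds_unique hLp (hcont.tendsto.mono_left nhdsWithin_le_nhds)
    have hLm_eq := tendsto_nhds_unique hLm (hcont.tendsto.mono_left nhdsWithin_le_nhds)
    refine mul_ne_zero hA.sectorKink_ne_zero hB.sectorKink_ne_zero ?_
    rw [← hjump, hLp_eq, hLm_eq, sub_self]
  · rintro ⟨hCpos, hCneg, hDpos, hDneg⟩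
    refine ⟨Lp, Lm, hLp, hLm, sub_pos.1 ?_⟩
    rw [hjump]
    exact mul_pos_of_neg_of_neg (hA.sectorKink_neg_of_nonempty hCpos hCneg)
      (hB.sectorKink_neg_of_nonempty hDpos hDneg)
  · rintro ⟨hCpos, hCneg, hDsub⟩
    refine ⟨Lp, Lm, hLp, hLm, sub_neg.1 ?_⟩
    rw [hjump]
    exact mul_neg_of_neg_of_pos (hA.sectorKink_neg_of_nonempty hCpos hCneg)
      (hB.sectorKink_pos_of_subset hDsub)
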